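/- Let A_1,...,A_l ∈ M(ℂ^d) be selfadjoint with Tr(ρ A_i) = 0 for all i, and let K := (1/l!) Σ_{τ ∈ S(l)} A_{τ(1)} ⊗ ... ⊗ A_{τ(l)}, a quantum symmetric kernel of order l. Then there exist p ∈ ℕ, selfadjoint matrices B_1,...,B_p ∈ M(ℂ^d), and noncommutative polynomials P_0,...,P_{l−2} (elements of the free algebra over ℝ in l+p noncommuting variables) each of degree strictly less than l, all independent of n, such that for every n ≥ l the quantum U-statistic U_n with kernel K satisfies: (l!/n^{l/2}) C(n,l) U_n = S(F_n(A_1),...,F_n(A_l)) + Σ_{t=0}^{l−2} n^{−t/2} P_t(F_n(A_1),...,F_n(A_l), P_n(B_1),...,P_n(B_p)), where S(X_1,...,X_l) := (1/l!) Σ_{τ ∈ S(l)} X_{τ(1)}⋯X_{τ(l)} and P_t is evaluated at the indicated operators. -/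

import Mathlib

open scoped BigOperators
open Matrix
open scoped ComplexOrder

/-- The tensor product of a family of `d × d` matrices, as a matrix indexed by
multi-indices `Fin n → Fin d`. -/
noncomputable def tensorFam {d n : ℕ} (M : Fin n → Matrix (Fin d) (Fin d) ℂ) :
    Matrix (Fin n → Fin d) (Fin n → Fin d) ℂ :=
  Matrix.of fun x y => ∏ i, M i (x i) (y i)

/-- `H^{(i)} = 1 ⊗ ... ⊗ H ⊗ ... ⊗ 1`, with `H` in the `i`-th tensor slot. -/
noncomputable def amp {d n : ℕ} (i : Fin n) (H : Matrix (Fin d) (Fin d) ℂ) :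
    Matrix (Fin n → Fin d) (Fin n → Fin d) ℂ :=
  tensorFam fun j => if j = i then H else 1

/-- The fluctuation observable `F_n(A) := n^{-1/2} Σ_i A^{(i)}`. -/
noncomputable def Fluct {d : ℕ} (n : ℕ) (A : Matrix (Fin d) (Fin d) ℂ) :
    Matrix (Fin n → Fin d) (Fin n → Fin d) ℂ :=
  (Real.sqrt n)⁻¹ • ∑ i : Fin n, amp i A

/-- The empirical average `P_n(B) := n⁻¹ Σ_i B^{(i)}`. -/
noncomputable def Emp {d : ℕ} (n : ℕ) (B : Matrix (Fin d) (Fin d) ℂ) :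
    Matrix (Fin n → Fin d) (Fin n → Fin d) ℂ :=
  ((n : ℝ))⁻¹ • ∑ i : Fin n, amp i B

/-- The ampliation `K^{(β)}` of a kernel `K` of order `l` to `(ℂ^d)^{⊗n}`. -/
noncomputable def ampl {d l n : ℕ} (K : Matrix (Fin l → Fin d) (Fin l → Fin d) ℂ)
    (β : Finset (Fin n)) (hβ : β.card = l) :
    Matrix (Fin n → Fin d) (Fin n → Fin d) ℂ :=
  Matrix.of fun x y =>
    K (fun i => x ((β.orderIsoOfFin hβ i : Fin n)))
        (fun i => y ((β.orderIsoOfFin hβ i : Fin n))) *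
      ∏ j ∈ βᶜ, if x j = y j then (1 : ℂ) else 0

/-- The quantum U-statistic `U_n = C(n,l)⁻¹ Σ_β K^{(β)}`. -/
noncomputable def qUstat {d l : ℕ} (K : Matrix (Fin l → Fin d) (Fin l → Fin d) ℂ)
    (n : ℕ) : Matrix (Fin n → Fin d) (Fin n → Fin d) ℂ :=
  (n.choose l : ℂ)⁻¹ •
    ∑ β ∈ (Finset.powersetCard l (Finset.univ : Finset (Fin n))).attach,
      ampl K β.1 (Finset.mem_powersetCard.mp β.2).2

/-- The symmetrized product `S(X_1, ..., X_m) = (1/m!) Σ_τ X_{τ(1)} ⋯ X_{τ(m)}`. -/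
noncomputable def symProd {N : Type*} [Fintype N] [DecidableEq N] {m : ℕ}
    (X : Fin m → Matrix N N ℂ) : Matrix N N ℂ :=
  (m.factorial : ℝ)⁻¹ • ∑ τ : Equiv.Perm (Fin m), (List.ofFn fun i => X (τ i)).prod

/-- The ℝ-submodule of the free (noncommutative) algebra spanned by the monomials of
degree strictly less than `l` (in the given generators). -/
noncomputable def lowDegree (ι : Type*) (l : ℕ) : Submodule ℝ (FreeAlgebra ℝ ι) :=
  Submodule.span ℝ {x | ∃ m : ℕ, m < l ∧ ∃ w : Fin m → ι,
    x = (List.ofFn fun i => FreeAlgebra.ι ℝ (w i)).prod}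

/-!
Permutations are the surjective self-maps, so inclusion–exclusion over the missed values polarizes a
symmetrized multilinear expression into a signed sum of its values on the diagonal elements
`C = ∑ i ∈ Tᶜ, A i`. This reduces the identity to kernels `C ⊗ ⋯ ⊗ C`, and since each `C` is again
selfadjoint, real coefficients suffice.

For such a kernel the U-statistic is the elementary symmetric function `e_l` of the commuting
elements `C^{(1)}, ..., C^{(n)}`, up to the factor `C(n,l)`. Newton's identities express
`n^{-l/2} e_l` through the power sums of the `n^{-1/2} C^{(i)}`, which are `F_n(C)` in degree `1`
and `n^{-m/2} P_n(C^{m+2})` in degree `m + 2`. In the Newton recursion, replacing a factor `F_n(C)`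
by a higher power sum lowers the degree of the monomial, and a power sum of degree `m + 2` uses up
`m + 2` of the total degree `l` but contributes only `n^{-m/2}`. Hence `n^{-l/2} e_l` equals
`F_n(C)^l / l!` plus terms of degree less than `l` and of order at most `l - 2` in `n^{-1/2}`.
-/

section Polarization

variable {α R M N : Type*} [Fintype α] [DecidableEq α]

lemma sum_perm_eq_sum_piFinset_compl [AddCommGroup N] (G : (α → α) → N) :
    ∑ τ : Equiv.Perm α, G τ =
      ∑ T : Finset α, (-1 : ℤ) ^ T.card • ∑ f ∈ Fintype.piFinset fun _ => Tᶜ, G f := by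
  let avoiding (i : α) : Finset (α → α) := {f | ∀ k, f k ≠ i}
  have mem_surj (f : α → α) :
      f ∈ Finset.univ.inf (fun i => (avoiding i)ᶜ) ↔ Function.Surjective f := by
    simp [avoiding, Finset.mem_inf, Function.Surjective]
  have perm_sum : ∑ τ : Equiv.Perm α, G τ =
      ∑ f ∈ Finset.univ.inf (fun i => (avoiding i)ᶜ), G f := by
    refine Finset.sum_bij (fun τ _ => ⇑τ) (fun τ _ => (mem_surj τ).2 τ.surjective)
      (fun _ _ _ _ h => DFunLike.coe_injective h) (fun f hf => ?_) (fun _ _ => rfl)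
    have hf := (mem_surj f).1 hf
    exact ⟨.ofBijective f ⟨Finite.injective_iff_surjective.2 hf, hf⟩, Finset.mem_univ _, rfl⟩
  have avoiding_inf (T : Finset α) : T.inf avoiding = Fintype.piFinset fun _ => Tᶜ := by
    ext f
    simp only [avoiding, Finset.mem_inf, Finset.mem_filter_univ, Fintype.mem_piFinset,
      Finset.mem_compl]
    exact ⟨fun h k hk => h _ hk k rfl, fun h i hi k hk => h k (hk ▸ hi)⟩
  rw [perm_sum, Finset.inclusion_exclusion_sum_inf_compl, Finset.powerset_univ]
  simp only [avoiding_inf]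

lemma sum_perm_multilinearMap [Semiring R] [AddCommMonoid M] [Module R M] [AddCommGroup N]
    [Module R N] (f : MultilinearMap R (fun _ : α => M) N) (v : α → M) :
    ∑ τ : Equiv.Perm α, f (fun i => v (τ i)) =
      ∑ T : Finset α, (-1 : ℤ) ^ T.card • f fun _ => ∑ i ∈ Tᶜ, v i := by
  rw [sum_perm_eq_sum_piFinset_compl fun τ => f fun i => v (τ i)]
  simp only [f.map_sum_finset (fun _ j => v j)]

end Polarization

section Newton

variable (𝕜 : Type*) {A B σ : Type*} [Field 𝕜] [Ring A] [Algebra 𝕜 A] [Ring B] [Algebra 𝕜 B]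

/-- The `k`-th elementary symmetric element determined by Newton's identities from the power
sums `q`. Indices are shifted: `q m` plays the role of the power sum of degree `m + 1`. -/
noncomputable def newtonEsymm (q : ℕ → A) : ℕ → A
  | 0 => 1
  | k + 1 =>
    (k + 1 : 𝕜)⁻¹ • ∑ j : Fin (k + 1), (-1 : 𝕜) ^ (k + j : ℕ) • (newtonEsymm q j * q (k - j))

lemma newtonEsymm_congr {q r : ℕ → A} {k : ℕ} (h : ∀ m < k, q m = r m) :
    newtonEsymm 𝕜 q k = newtonEsymm 𝕜 r k := by
  induction k using Nat.strong_induction_on with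
  | _ k ih =>
    rcases k with _ | k
    · simp only [newtonEsymm]
    rw [newtonEsymm, newtonEsymm]
    congr! 3 with j
    rw [ih j j.isLt fun m hm => h m (hm.trans j.isLt), h _ (by omega)]

lemma map_newtonEsymm (φ : A →ₐ[𝕜] B) (q : ℕ → A) (k : ℕ) :
    φ (newtonEsymm 𝕜 q k) = newtonEsymm 𝕜 (fun m => φ (q m)) k := by
  induction k using Nat.strong_induction_on with
  | _ k ih =>
    rcases k with _ | k
    · simp only [newtonEsymm, map_one]
    simp only [newtonEsymm, map_smul, map_sum, map_mul]
    exact congrArg _ (Finset.sum_congr rfl fun j _ => by rw [ih j j.isLt])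

lemma newtonEsymm_smul (c : 𝕜) (q : ℕ → A) (k : ℕ) :
    newtonEsymm 𝕜 (fun m => c ^ (m + 1) • q m) k = c ^ k • newtonEsymm 𝕜 q k := by
  induction k using Nat.strong_induction_on with
  | _ k ih =>
    rcases k with _ | k
    · simp only [newtonEsymm, pow_zero, one_smul]
    rw [newtonEsymm, newtonEsymm, smul_comm (c ^ _), Finset.smul_sum (r := c ^ _)]
    refine congrArg _ (Finset.sum_congr rfl fun j _ => ?_)
    rw [ih j j.isLt, smul_mul_smul_comm, ← pow_add, smul_comm,
      show j + (k - j + 1) = k + 1 by omega]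

lemma newtonEsymm_succ_sub_smul_pow (q : ℕ → A) (k : ℕ) :
    newtonEsymm 𝕜 q (k + 1) - ((k + 1).factorial : 𝕜)⁻¹ • q 0 ^ (k + 1) =
      (k + 1 : 𝕜)⁻¹ • (∑ j : Fin k, (-1 : 𝕜) ^ (k + j : ℕ) • (newtonEsymm 𝕜 q j * q (k - j)) +
        (newtonEsymm 𝕜 q k - (k.factorial : 𝕜)⁻¹ • q 0 ^ k) * q 0) := by
  have last_term : (-1 : 𝕜) ^ (k + k) • (newtonEsymm 𝕜 q k * q (k - k)) =
      newtonEsymm 𝕜 q k * q 0 := by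
    rw [(Even.add_self k).neg_one_pow, one_smul, Nat.sub_self]
  rw [newtonEsymm, Fin.sum_univ_castSucc]
  simp only [Fin.val_castSucc, Fin.val_last, last_term, Nat.factorial_succ, Nat.cast_mul, mul_inv,
    mul_smul, Nat.cast_succ, pow_succ, sub_mul, smul_mul_assoc, smul_add, smul_sub, add_sub_assoc]

lemma esymm_eq_newtonEsymm_psum [CharZero 𝕜] [Fintype σ] (k : ℕ) :
    MvPolynomial.esymm σ 𝕜 k = newtonEsymm 𝕜 (fun m => MvPolynomial.psum σ 𝕜 (m + 1)) k := by
  classical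
  induction k using Nat.strong_induction_on with
  | _ k ih =>
    rcases k with _ | k
    · rw [newtonEsymm, MvPolynomial.esymm_zero]
    have newton := MvPolynomial.mul_esymm_eq_sum σ 𝕜 (k + 1)
    rw [Finset.sum_filter, Finset.Nat.sum_antidiagonal_eq_sum_range_succ_mk,
      Finset.sum_range_succ, if_neg (lt_irrefl _), add_zero, Finset.mul_sum,
      Finset.sum_range] at newton
    have hk : ((k + 1 : ℕ) : 𝕜) ≠ 0 := Nat.cast_ne_zero.2 k.succ_ne_zero
    rw [newtonEsymm, ← Nat.cast_succ, eq_inv_smul_iff₀ hk, Nat.cast_smul_eq_nsmul, nsmul_eq_mul,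
      newton]
    refine Finset.sum_congr rfl fun j _ => ?_
    rw [if_pos j.isLt, ← ih j j.isLt, Nat.succ_sub j.is_le, Algebra.smul_def, map_pow, map_neg,
      map_one]
    ring

open scoped IsMulCommutative in
lemma exists_mvPolynomial_algHom_of_commute {x : σ → A} (hx : ∀ i j, Commute (x i) (x j)) :
    ∃ φ : MvPolynomial σ 𝕜 →ₐ[𝕜] A, ∀ i, φ (MvPolynomial.X i) = x i := by
  let S := Algebra.adjoin 𝕜 (Set.range x)
  have : IsMulCommutative S := Algebra.isMulCommutative_adjoin 𝕜 <| by
    rintro _ ⟨i, rfl⟩ _ ⟨j, rfl⟩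
    exact hx i j
  let y (i : σ) : S := ⟨x i, Algebra.subset_adjoin ⟨i, rfl⟩⟩
  exact ⟨S.val.comp (MvPolynomial.aeval y), fun i => by simp [y]⟩

end Newton

section LowDegree

variable {ι : Type*}

lemma lowDegree_mono {j k : ℕ} (h : j ≤ k) : lowDegree ι j ≤ lowDegree ι k :=
  Submodule.span_mono fun _ ⟨m, hm, hw⟩ => ⟨m, hm.trans_le h, hw⟩

lemma one_mem_lowDegree : (1 : FreeAlgebra ℝ ι) ∈ lowDegree ι 1 :=
  Submodule.subset_span ⟨0, Nat.one_pos, Fin.elim0, by simp⟩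

lemma ι_mem_lowDegree (i : ι) : FreeAlgebra.ι ℝ i ∈ lowDegree ι 2 :=
  Submodule.subset_span ⟨1, Nat.one_lt_two, fun _ => i, by simp⟩

lemma mul_mem_lowDegree {j k m : ℕ} (h : j + k ≤ m + 1) {x y : FreeAlgebra ℝ ι}
    (hx : x ∈ lowDegree ι j) (hy : y ∈ lowDegree ι k) : x * y ∈ lowDegree ι m := by
  suffices lowDegree ι j * lowDegree ι k ≤ lowDegree ι m from this (Submodule.mul_mem_mul hx hy)
  rw [lowDegree, lowDegree, Submodule.span_mul_span, Submodule.span_le]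
  rintro _ ⟨_, ⟨a, ha, v, rfl⟩, _, ⟨b, hb, w, rfl⟩, rfl⟩
  refine Submodule.subset_span ⟨a + b, by omega, Fin.append v w, ?_⟩
  simp [List.ofFn_comp', List.ofFn_fin_append]

lemma pow_mem_lowDegree {x : FreeAlgebra ℝ ι} (hx : x ∈ lowDegree ι 2) (k : ℕ) :
    x ^ k ∈ lowDegree ι (k + 1) := by
  induction k with
  | zero => simpa using one_mem_lowDegree
  | succ k ih => exact pow_succ x k ▸ mul_mem_lowDegree (by omega) ih hx

end LowDegree

section BoundedPolynomials

open Polynomial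

variable {ι : Type*}

/-- The polynomials `∑ t, P t * X ^ t` in a central variable `X` of degree less than `s`, whose
coefficients `P t` are noncommutative polynomials of degree less than `k`. The variable `X` stands
for `n ^ (-1 / 2)`. -/
noncomputable def polyLowDegree (ι : Type*) (s k : ℕ) : Submodule ℝ (FreeAlgebra ℝ ι)[X] where
  carrier := {Q | Q.degree < s ∧ ∀ t, Q.coeff t ∈ lowDegree ι k}
  zero_mem' := ⟨by simp, fun _ => by simp⟩
  add_mem' hP hQ := ⟨(degree_add_le _ _).trans_lt (max_lt hP.1 hQ.1), fun t => by
    simpa only [coeff_add] using add_mem (hP.2 t) (hQ.2 t)⟩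
  smul_mem' c Q hQ := ⟨(degree_smul_le c Q).trans_lt hQ.1, fun t => by
    simpa only [coeff_smul] using Submodule.smul_mem _ c (hQ.2 t)⟩

lemma polyLowDegree_mono {s s' k k' : ℕ} (hs : s ≤ s') (hk : k ≤ k') :
    polyLowDegree ι s k ≤ polyLowDegree ι s' k' :=
  fun _ hQ => ⟨hQ.1.trans_le (mod_cast hs), fun t => lowDegree_mono hk (hQ.2 t)⟩

lemma monomial_mem_polyLowDegree {s k t : ℕ} (ht : t < s) {x : FreeAlgebra ℝ ι}
    (hx : x ∈ lowDegree ι k) : monomial t x ∈ polyLowDegree ι s k := by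
  refine ⟨(degree_monomial_le t x).trans_lt (mod_cast ht), fun u => ?_⟩
  rw [coeff_monomial]
  split_ifs
  exacts [hx, zero_mem _]

lemma C_mem_polyLowDegree {s k : ℕ} (hs : 0 < s) {x : FreeAlgebra ℝ ι}
    (hx : x ∈ lowDegree ι k) : C x ∈ polyLowDegree ι s k := by
  simpa only [monomial_zero_left] using monomial_mem_polyLowDegree hs hx

lemma mul_mem_polyLowDegree {s s' u k k' m : ℕ} (hu : s + s' ≤ u + 1) (hm : k + k' ≤ m + 1)
    {P Q : (FreeAlgebra ℝ ι)[X]} (hP : P ∈ polyLowDegree ι s k)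
    (hQ : Q ∈ polyLowDegree ι s' k') : P * Q ∈ polyLowDegree ι u m := by
  refine ⟨(degree_lt_iff_coeff_zero _ _).2 fun t ht => ?_, fun t => ?_⟩
  · rw [coeff_mul]
    refine Finset.sum_eq_zero fun ⟨a, b⟩ hab => ?_
    have hab : a + b = t := Finset.HasAntidiagonal.mem_antidiagonal.1 hab
    rcases le_or_gt s a with ha | ha
    · rw [(degree_lt_iff_coeff_zero _ _).1 hP.1 a ha, zero_mul]
    · rw [(degree_lt_iff_coeff_zero _ _).1 hQ.1 b (by omega), mul_zero]
  · rw [coeff_mul]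
    exact sum_mem fun a _ => mul_mem_lowDegree hm (hP.2 a.1) (hQ.2 a.2)

/-- The power sums of `x_1 / √n, ..., x_n / √n` in terms of the fluctuation `f` and the empirical
averages `b m` of `x ^ (m + 2)`, with the index shift of `newtonEsymm`. -/
noncomputable def scaledPowerSum (f : FreeAlgebra ℝ ι) (b : ℕ → FreeAlgebra ℝ ι) :
    ℕ → (FreeAlgebra ℝ ι)[X]
  | 0 => C f
  | m + 1 => monomial m (b m)

lemma newtonEsymm_scaledPowerSum_sub_mem {f : FreeAlgebra ℝ ι} {b : ℕ → FreeAlgebra ℝ ι}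
    (hf : f ∈ lowDegree ι 2) (hb : ∀ m, b m ∈ lowDegree ι 2) (k : ℕ) :
    newtonEsymm ℝ (scaledPowerSum f b) k - (k.factorial : ℝ)⁻¹ • C f ^ k ∈
      polyLowDegree ι (k - 1) k := by
  induction k using Nat.strong_induction_on with
  | _ k ih =>
    rcases k with _ | k
    · simp [newtonEsymm]
    have E_mem (j : ℕ) (hj : j < k + 1) :
        newtonEsymm ℝ (scaledPowerSum f b) j ∈ polyLowDegree ι (j + 1) (j + 1) := by
      have power_mem : C f ^ j ∈ polyLowDegree ι (j + 1) (j + 1) := by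
        simpa only [C_pow] using C_mem_polyLowDegree j.succ_pos (pow_mem_lowDegree hf j)
      rw [← sub_add_cancel (newtonEsymm ℝ _ j) ((j.factorial : ℝ)⁻¹ • C f ^ j)]
      exact add_mem (polyLowDegree_mono (by omega) j.le_succ (ih j hj))
        (Submodule.smul_mem _ _ power_mem)
    have higher_mem (j : Fin k) :
        newtonEsymm ℝ (scaledPowerSum f b) j * scaledPowerSum f b (k - j) ∈
          polyLowDegree ι k (k + 1) := by
      obtain ⟨i, hi⟩ : ∃ i, k - j = i + 1 := ⟨k - j - 1, by omega⟩
      rw [hi]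
      exact mul_mem_polyLowDegree (by omega) (by omega) (E_mem j (by omega))
        (monomial_mem_polyLowDegree i.lt_succ_self (hb i))
    have linear_mem := mul_mem_polyLowDegree (u := k) (m := k + 1) (by omega) (by omega)
      (ih k k.lt_succ_self) (C_mem_polyLowDegree Nat.one_pos hf)
    rw [show C f = scaledPowerSum f b 0 from rfl, newtonEsymm_succ_sub_smul_pow]
    exact Submodule.smul_mem _ _ <|
      add_mem (sum_mem fun j _ => Submodule.smul_mem _ _ (higher_mem j)) linear_mem

/-- Evaluation of a polynomial over the free algebra at `g i` for the generators and at the scalar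
`c` for the central variable. -/
noncomputable def evalAt {A : Type*} [Ring A] [Algebra ℝ A] (g : ι → A) (c : ℝ) :
    (FreeAlgebra ℝ ι)[X] →ₐ[ℝ] A :=
  eval₂AlgHom (FreeAlgebra.lift ℝ g) (algebraMap ℝ A c) fun _ =>
    Algebra.commute_algebraMap_right _ _

lemma evalAt_monomial {A : Type*} [Ring A] [Algebra ℝ A] (g : ι → A) (c : ℝ) (t : ℕ)
    (x : FreeAlgebra ℝ ι) : evalAt g c (monomial t x) = c ^ t • FreeAlgebra.lift ℝ g x := by
  change eval₂ _ _ _ = _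
  rw [eval₂_monomial, ← map_pow, ← Algebra.commutes, ← Algebra.smul_def]
  rfl

lemma evalAt_eq_sum {A : Type*} [Ring A] [Algebra ℝ A] (g : ι → A) (c : ℝ) {s k : ℕ}
    {Q : (FreeAlgebra ℝ ι)[X]} (hQ : Q ∈ polyLowDegree ι s k) :
    evalAt g c Q = ∑ t : Fin s, c ^ (t : ℕ) • FreeAlgebra.lift ℝ g (Q.coeff t) := by
  have expansion : Q = ∑ t : Fin s, monomial (t : ℕ) (Q.coeff t) := by
    rw [sum_fin (fun t x => monomial t x) (fun t => monomial_zero_right t) hQ.1, sum_monomial_eq]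
  conv_lhs => rw [expansion, map_sum]
  simp only [evalAt_monomial]

end BoundedPolynomials

section TensorPower

variable {d n : ℕ}

/-- The tensor product of matrices as a multilinear map. -/
noncomputable def tensorMultilinear (d n : ℕ) :
    MultilinearMap ℂ (fun _ : Fin n => Matrix (Fin d) (Fin d) ℂ)
      (Matrix (Fin n → Fin d) (Fin n → Fin d) ℂ) :=
  (Matrix.ofLinearEquiv ℂ).toLinearMap.compMultilinearMap <| .pi fun x => .pi fun y =>
    (MultilinearMap.mkPiAlgebra ℂ (Fin n) ℂ).compLinearMap fun i =>
      Matrix.entryLinearMap ℂ ℂ (x i) (y i)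

@[simp]
lemma tensorMultilinear_apply (M : Fin n → Matrix (Fin d) (Fin d) ℂ) :
    tensorMultilinear d n M = tensorFam M := by
  ext x y
  simp [tensorMultilinear, tensorFam]

lemma tensorFam_mul (M N : Fin n → Matrix (Fin d) (Fin d) ℂ) :
    tensorFam M * tensorFam N = tensorFam fun i => M i * N i := by
  ext x y
  simp only [tensorFam, Matrix.mul_apply, Matrix.of_apply, ← Finset.prod_mul_distrib,
    Finset.prod_univ_sum, Fintype.piFinset_univ]

lemma tensorFam_one : tensorFam (fun _ : Fin n => (1 : Matrix (Fin d) (Fin d) ℂ)) = 1 := by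
  ext x y
  simp [tensorFam, Matrix.one_apply, Finset.prod_ite_zero, funext_iff]

lemma tensorMultilinear_toLinearMap_one (i : Fin n) (H : Matrix (Fin d) (Fin d) ℂ) :
    (tensorMultilinear d n).toLinearMap 1 i H = amp i H := by
  rw [MultilinearMap.toLinearMap_apply, tensorMultilinear_apply, amp]
  exact congrArg tensorFam (funext fun j => by simp [Function.update_apply])

lemma amp_one (i : Fin n) : amp i (1 : Matrix (Fin d) (Fin d) ℂ) = 1 := by
  simp only [amp, ite_self, tensorFam_one]

lemma amp_mul (i : Fin n) (H K : Matrix (Fin d) (Fin d) ℂ) :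
    amp i (H * K) = amp i H * amp i K := by
  rw [amp, amp, amp, tensorFam_mul]
  exact congrArg tensorFam (funext fun j => by split_ifs <;> simp)

/-- The embedding `H ↦ H^{(i)}` of the single-site algebra into the `i`-th tensor slot. -/
noncomputable def ampAlgHom (i : Fin n) :
    Matrix (Fin d) (Fin d) ℂ →ₐ[ℂ] Matrix (Fin n → Fin d) (Fin n → Fin d) ℂ :=
  .ofLinearMap ((tensorMultilinear d n).toLinearMap 1 i)
    (by rw [tensorMultilinear_toLinearMap_one, amp_one])
    (fun H K => by simp only [tensorMultilinear_toLinearMap_one, amp_mul])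

lemma ampAlgHom_apply (i : Fin n) (H : Matrix (Fin d) (Fin d) ℂ) : ampAlgHom i H = amp i H :=
  tensorMultilinear_toLinearMap_one i H

lemma amp_commute (i j : Fin n) (H : Matrix (Fin d) (Fin d) ℂ) :
    Commute (amp i H) (amp j H) := by
  rw [Commute, SemiconjBy, amp, amp, tensorFam_mul, tensorFam_mul]
  exact congrArg tensorFam (funext fun k => by split_ifs <;> simp)

lemma Fluct_sum {κ : Type*} (n : ℕ) (s : Finset κ) (H : κ → Matrix (Fin d) (Fin d) ℂ) :
    Fluct n (∑ k ∈ s, H k) = ∑ k ∈ s, Fluct n (H k) := by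
  simp only [Fluct, ← ampAlgHom_apply, map_sum, ← Finset.smul_sum]
  rw [Finset.sum_comm]

/-- The elementary symmetric function `∑_β ∏_{i ∈ β} C^{(i)}` of the ampliations of `C`, where `β`
ranges over the `k`-element sets of sites. -/
noncomputable def ampEsymm (n k : ℕ) (C : Matrix (Fin d) (Fin d) ℂ) :
    Matrix (Fin n → Fin d) (Fin n → Fin d) ℂ :=
  ∑ β ∈ Finset.powersetCard k (Finset.univ : Finset (Fin n)),
    tensorFam fun j => if j ∈ β then C else 1

lemma map_prod_X_eq_tensorFam
    {φ : MvPolynomial (Fin n) ℝ →ₐ[ℝ] Matrix (Fin n → Fin d) (Fin n → Fin d) ℂ}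
    {C : Matrix (Fin d) (Fin d) ℂ} (hφ : ∀ i, φ (MvPolynomial.X i) = amp i C) (β : Finset (Fin n)) :
    φ (∏ i ∈ β, MvPolynomial.X i) = tensorFam fun j => if j ∈ β then C else 1 := by
  induction β using Finset.induction_on with
  | empty => simp [tensorFam_one]
  | insert i s hi ih =>
    rw [Finset.prod_insert hi, map_mul, ih, hφ, amp, tensorFam_mul]
    refine congrArg tensorFam (funext fun j => ?_)
    by_cases hj : j = i
    · simp [hj, hi]
    · simp [hj]

lemma ampEsymm_eq_newtonEsymm (n k : ℕ) (C : Matrix (Fin d) (Fin d) ℂ) :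
    ampEsymm n k C = newtonEsymm ℝ (fun m => ∑ i : Fin n, amp i (C ^ (m + 1))) k := by
  obtain ⟨φ, hφ⟩ := exists_mvPolynomial_algHom_of_commute ℝ fun i j => amp_commute (n := n) i j C
  calc
    ampEsymm n k C = φ (MvPolynomial.esymm (Fin n) ℝ k) := by
      simp only [MvPolynomial.esymm, map_sum, map_prod_X_eq_tensorFam hφ, ampEsymm]
    _ = newtonEsymm ℝ (fun m => φ (MvPolynomial.psum (Fin n) ℝ (m + 1))) k := by
      rw [esymm_eq_newtonEsymm_psum, map_newtonEsymm]
    _ = newtonEsymm ℝ (fun m => ∑ i : Fin n, amp i (C ^ (m + 1))) k := by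
      simp only [MvPolynomial.psum, map_sum, map_pow, hφ, ← ampAlgHom_apply]

lemma inv_sqrt_pow_smul_ampEsymm_eq_evalAt {ι : Type*} {k : ℕ} {C : Matrix (Fin d) (Fin d) ℂ}
    {g : ι → Matrix (Fin n → Fin d) (Fin n → Fin d) ℂ} {f : FreeAlgebra ℝ ι}
    {b : ℕ → FreeAlgebra ℝ ι} (hf : FreeAlgebra.lift ℝ g f = Fluct n C)
    (hb : ∀ m, m + 1 < k → FreeAlgebra.lift ℝ g (b m) = Emp n (C ^ (m + 2))) :
    (√n)⁻¹ ^ k • ampEsymm n k C = evalAt g (√n)⁻¹ (newtonEsymm ℝ (scaledPowerSum f b) k) := by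
  rw [ampEsymm_eq_newtonEsymm, ← newtonEsymm_smul, map_newtonEsymm]
  refine newtonEsymm_congr ℝ fun m hm => ?_
  rcases m with _ | m
  · rw [scaledPowerSum, ← Polynomial.monomial_zero_left, evalAt_monomial, hf]
    simp [Fluct]
  · rw [scaledPowerSum, evalAt_monomial, hb m hm, Emp, smul_smul, add_assoc m 1 1, pow_add,
      inv_pow _ (1 + 1), Real.sq_sqrt n.cast_nonneg]

end TensorPower

section UStatistic

variable {d l n : ℕ}

lemma isLinearMap_qUstat (n : ℕ) :
    IsLinearMap ℂ fun K : Matrix (Fin l → Fin d) (Fin l → Fin d) ℂ => qUstat K n where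
  map_add K K' := by
    rw [qUstat, qUstat, qUstat, ← smul_add, ← Finset.sum_add_distrib]
    congr! with β
    ext x y
    simp only [ampl, Matrix.of_apply, Matrix.add_apply, add_mul]
  map_smul c K := by
    rw [qUstat, qUstat, smul_comm c, Finset.smul_sum (r := c)]
    congr! with β
    ext x y
    simp only [ampl, Matrix.of_apply, Matrix.smul_apply, smul_eq_mul, mul_assoc]

lemma ampl_tensorFam_const (C : Matrix (Fin d) (Fin d) ℂ) (β : Finset (Fin n)) (hβ : β.card = l) :
    ampl (tensorFam fun _ : Fin l => C) β hβ = tensorFam fun j => if j ∈ β then C else 1 := by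
  ext x y
  simp only [ampl, tensorFam, Matrix.of_apply]
  rw [← Finset.prod_mul_prod_compl β]
  congr 1
  · calc
      ∏ i, C (x (β.orderIsoOfFin hβ i)) (y (β.orderIsoOfFin hβ i))
          = ∏ j : β, C (x j) (y j) :=
        (β.orderIsoOfFin hβ).toEquiv.prod_comp fun j : β => C (x j) (y j)
      _ = ∏ j ∈ β, C (x j) (y j) := β.prod_coe_sort fun j => C (x j) (y j)
      _ = ∏ j ∈ β, (if j ∈ β then C else 1) (x j) (y j) :=
        Finset.prod_congr rfl fun j hj => by rw [if_pos hj]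
  · refine Finset.prod_congr rfl fun j hj => ?_
    rw [if_neg (Finset.mem_compl.1 hj), Matrix.one_apply]

lemma qUstat_tensorFam_const (n : ℕ) (C : Matrix (Fin d) (Fin d) ℂ) :
    qUstat (tensorFam fun _ : Fin l => C) n = (n.choose l : ℂ)⁻¹ • ampEsymm n l C := by
  simp only [qUstat, ampl_tensorFam_const]
  rw [ampEsymm, Finset.sum_attach (Finset.powersetCard l Finset.univ)
    fun β : Finset (Fin n) => tensorFam fun j => if j ∈ β then C else 1]

lemma sqrt_pow_of_nonneg {x : ℝ} (hx : 0 ≤ x) (k : ℕ) : √(x ^ k) = √x ^ k := by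
  rw [Real.sqrt_eq_iff_mul_self_eq (by positivity) (by positivity), ← mul_pow,
    Real.mul_self_sqrt hx]

lemma smul_qUstat_symmetrized (hn : l ≤ n) (A : Fin l → Matrix (Fin d) (Fin d) ℂ) :
    ((l.factorial * n.choose l : ℝ) / √((n : ℝ) ^ l)) •
        qUstat ((l.factorial : ℂ)⁻¹ • ∑ τ : Equiv.Perm (Fin l), tensorFam fun i => A (τ i)) n =
      ∑ T : Finset (Fin l), (-1 : ℤ) ^ T.card • (√n)⁻¹ ^ l • ampEsymm n l (∑ i ∈ Tᶜ, A i) := by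
  have polarized : ∑ τ : Equiv.Perm (Fin l), tensorFam (fun i => A (τ i)) =
      ∑ T : Finset (Fin l), (-1 : ℤ) ^ T.card • tensorFam fun _ => ∑ i ∈ Tᶜ, A i := by
    simpa only [tensorMultilinear_apply] using sum_perm_multilinearMap (tensorMultilinear d l) A
  have expanded : qUstat ((l.factorial : ℂ)⁻¹ •
        ∑ τ : Equiv.Perm (Fin l), tensorFam fun i => A (τ i)) n =
      ((l.factorial : ℝ)⁻¹ * (n.choose l : ℝ)⁻¹) •
        ∑ T : Finset (Fin l), (-1 : ℤ) ^ T.card • ampEsymm n l (∑ i ∈ Tᶜ, A i) := by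
    let U := (isLinearMap_qUstat (d := d) (l := l) n).mk'
    calc
      _ = U ((l.factorial : ℂ)⁻¹ • ∑ T : Finset (Fin l), (-1 : ℤ) ^ T.card •
          tensorFam fun _ => ∑ i ∈ Tᶜ, A i) := by rw [polarized]; rfl
      _ = (l.factorial : ℂ)⁻¹ • ∑ T : Finset (Fin l), (-1 : ℤ) ^ T.card •
          (n.choose l : ℂ)⁻¹ • ampEsymm n l (∑ i ∈ Tᶜ, A i) := by
        simp only [map_smul, map_sum, map_zsmul, U, IsLinearMap.mk'_apply, qUstat_tensorFam_const]
      _ = _ := by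
        rw [← Complex.coe_smul, Complex.ofReal_mul, mul_smul, Complex.ofReal_inv,
          Complex.ofReal_inv, Complex.ofReal_natCast, Complex.ofReal_natCast,
          Finset.smul_sum (r := (n.choose l : ℂ)⁻¹)]
        simp only [smul_comm (n.choose l : ℂ)⁻¹]
  have scalar : (l.factorial * n.choose l : ℝ) / √((n : ℝ) ^ l) *
      ((l.factorial : ℝ)⁻¹ * (n.choose l : ℝ)⁻¹) = (√n)⁻¹ ^ l := by
    have hl : (l.factorial : ℝ) ≠ 0 := Nat.cast_ne_zero.2 l.factorial_ne_zero
    have hc : (n.choose l : ℝ) ≠ 0 := Nat.cast_ne_zero.2 (Nat.choose_pos hn).ne'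
    rw [sqrt_pow_of_nonneg n.cast_nonneg, inv_pow]
    field_simp
  rw [expanded, smul_smul, scalar, Finset.smul_sum]
  simp only [smul_comm ((√n)⁻¹ ^ l)]

lemma symProd_Fluct (n : ℕ) (A : Fin l → Matrix (Fin d) (Fin d) ℂ) :
    symProd (fun i : Fin l => Fluct n (A i)) =
      ∑ T : Finset (Fin l), (-1 : ℤ) ^ T.card •
        (l.factorial : ℝ)⁻¹ • Fluct n (∑ i ∈ Tᶜ, A i) ^ l := by
  have polarized := sum_perm_multilinearMap
    (MultilinearMap.mkPiAlgebraFin ℝ l (Matrix (Fin n → Fin d) (Fin n → Fin d) ℂ))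
    fun i => Fluct n (A i)
  simp only [MultilinearMap.mkPiAlgebraFin_apply, List.ofFn_const, List.prod_replicate,
    ← Fluct_sum] at polarized
  rw [symProd, polarized, Finset.smul_sum]
  simp only [smul_comm (l.factorial : ℝ)⁻¹]

/-- The polarized difference between a rescaled U-statistic with symmetrized product kernel and the
symmetrized product of its fluctuations, as a polynomial in `n ^ (-1 / 2)`. The generators `x i`
and `y T m` stand for `F_n(A_i)` and for `P_n((∑ i ∈ Tᶜ, A_i) ^ (m + 2))`. -/
noncomputable def ustatCorrection {ι : Type*} (x : Fin l → ι) (y : Finset (Fin l) → ℕ → ι) :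
    Polynomial (FreeAlgebra ℝ ι) :=
  ∑ T : Finset (Fin l), (-1 : ℤ) ^ T.card •
    (newtonEsymm ℝ (scaledPowerSum (∑ i ∈ Tᶜ, FreeAlgebra.ι ℝ (x i))
        fun m => FreeAlgebra.ι ℝ (y T m)) l -
      (l.factorial : ℝ)⁻¹ • Polynomial.C (∑ i ∈ Tᶜ, FreeAlgebra.ι ℝ (x i)) ^ l)

lemma ustatCorrection_mem {ι : Type*} (x : Fin l → ι) (y : Finset (Fin l) → ℕ → ι) :
    ustatCorrection x y ∈ polyLowDegree ι (l - 1) l :=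
  sum_mem fun _ _ => zsmul_mem (newtonEsymm_scaledPowerSum_sub_mem
    (sum_mem fun i _ => ι_mem_lowDegree (x i)) (fun _ => ι_mem_lowDegree _) l) _

lemma smul_qUstat_eq_symProd_add_evalAt {ι : Type*} {x : Fin l → ι}
    {y : Finset (Fin l) → ℕ → ι} (hn : l ≤ n) (A : Fin l → Matrix (Fin d) (Fin d) ℂ)
    {g : ι → Matrix (Fin n → Fin d) (Fin n → Fin d) ℂ} (hx : ∀ i, g (x i) = Fluct n (A i))
    (hy : ∀ T m, m + 1 < l → g (y T m) = Emp n ((∑ i ∈ Tᶜ, A i) ^ (m + 2))) :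
    ((l.factorial * n.choose l : ℝ) / √((n : ℝ) ^ l)) •
        qUstat ((l.factorial : ℂ)⁻¹ • ∑ τ : Equiv.Perm (Fin l), tensorFam fun i => A (τ i)) n =
      symProd (fun i : Fin l => Fluct n (A i)) + evalAt g (√n)⁻¹ (ustatCorrection x y) := by
  have lift_x (T : Finset (Fin l)) : FreeAlgebra.lift ℝ g (∑ i ∈ Tᶜ, FreeAlgebra.ι ℝ (x i)) =
      Fluct n (∑ i ∈ Tᶜ, A i) := by
    simp only [map_sum, FreeAlgebra.lift_ι_apply, hx, Fluct_sum]
  have lift_y (T : Finset (Fin l)) (m : ℕ) (hm : m + 1 < l) :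
      FreeAlgebra.lift ℝ g (FreeAlgebra.ι ℝ (y T m)) = Emp n ((∑ i ∈ Tᶜ, A i) ^ (m + 2)) := by
    rw [FreeAlgebra.lift_ι_apply, hy T m hm]
  rw [smul_qUstat_symmetrized hn, symProd_Fluct, ustatCorrection, map_sum, ← Finset.sum_add_distrib]
  refine Finset.sum_congr rfl fun T _ => ?_
  rw [map_zsmul, ← smul_add, map_sub, map_smul, map_pow, ← Polynomial.monomial_zero_left,
    evalAt_monomial, pow_zero, one_smul, lift_x,
    ← inv_sqrt_pow_smul_ampEsymm_eq_evalAt (lift_x T) (lift_y T), add_sub_cancel]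

end UStatistic

theorem stmt10_general (l : ℕ) :
    ∃ (p : ℕ) (P : Fin (l - 1) → FreeAlgebra ℝ (Fin (l + p))),
      (∀ t, P t ∈ lowDegree (Fin (l + p)) l) ∧
      ∀ {d : ℕ} (A : Fin l → Matrix (Fin d) (Fin d) ℂ), (∀ i, (A i).IsHermitian) →
        ∃ B : Fin p → Matrix (Fin d) (Fin d) ℂ, (∀ j, (B j).IsHermitian) ∧
          ∀ n : ℕ, l ≤ n →
            ((l.factorial * n.choose l : ℝ) / Real.sqrt ((n : ℝ) ^ l)) •
                qUstat ((l.factorial : ℂ)⁻¹ •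
                  ∑ τ : Equiv.Perm (Fin l), tensorFam fun i => A (τ i)) n =
              symProd (fun i : Fin l => Fluct n (A i)) +
                ∑ t : Fin (l - 1),
                  (Real.sqrt ((n : ℝ) ^ (t : ℕ)))⁻¹ •
                    FreeAlgebra.lift ℝ
                      (Fin.append (fun i : Fin l => Fluct n (A i))
                        (fun j : Fin p => Emp n (B j))) (P t) := by
  let e := Fintype.equivFin (Finset (Fin l) × Fin (l + 1))
  let x := Fin.castAdd (n := l) (Fintype.card (Finset (Fin l) × Fin (l + 1)))
  let y (T : Finset (Fin l)) (m : ℕ) := Fin.natAdd l (e (T, Fin.ofNat (l + 1) m))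
  have corr_mem := ustatCorrection_mem x y
  refine ⟨_, fun t => (ustatCorrection x y).coeff t, fun t => corr_mem.2 t, fun {d} A hA => ?_⟩
  let B j := (∑ i ∈ (e.symm j).1ᶜ, A i) ^ ((e.symm j).2 + 2 : ℕ)
  refine ⟨B, fun j => .pow (isSelfAdjoint_sum _ fun i _ => hA i) _, fun n hn => ?_⟩
  rw [smul_qUstat_eq_symProd_add_evalAt (x := x) (y := y) hn A
    (g := Fin.append (fun i => Fluct n (A i)) fun j => Emp n (B j)), evalAt_eq_sum _ _ corr_mem]
  · simp only [sqrt_pow_of_nonneg n.cast_nonneg, inv_pow]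
  · exact fun i => Fin.append_left _ _ i
  · intro T m hm
    simp [y, B, Nat.mod_eq_of_lt (by omega : m < l + 1)]

/-- **Polynomial expression of a quantum U-statistic in fluctuations and empirical
averages.** -/
theorem stmt10 {d l : ℕ} (ρ : Matrix (Fin d) (Fin d) ℂ)
    (hρ : ρ.PosDef) (hρtr : ρ.trace = 1)
    (A : Fin l → Matrix (Fin d) (Fin d) ℂ)
    (hA : ∀ i, (A i).IsHermitian)
    (hA0 : ∀ i, (ρ * A i).trace = 0) :
    ∃ (p : ℕ) (B : Fin p → Matrix (Fin d) (Fin d) ℂ),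
      (∀ j, (B j).IsHermitian) ∧
      ∃ P : Fin (l - 1) → FreeAlgebra ℝ (Fin (l + p)),
        (∀ t, P t ∈ lowDegree (Fin (l + p)) l) ∧
        ∀ n : ℕ, l ≤ n →
          ((l.factorial * n.choose l : ℝ) / Real.sqrt ((n : ℝ) ^ l)) •
              qUstat ((l.factorial : ℂ)⁻¹ •
                ∑ τ : Equiv.Perm (Fin l), tensorFam fun i => A (τ i)) n =
            symProd (fun i : Fin l => Fluct n (A i)) +
              ∑ t : Fin (l - 1),
                (Real.sqrt ((n : ℝ) ^ (t : ℕ)))⁻¹ •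
                  FreeAlgebra.lift ℝ
                    (Fin.append (fun i : Fin l => Fluct n (A i))
                      (fun j : Fin p => Emp n (B j))) (P t) := by
  obtain ⟨p, P, hP, h⟩ := stmt10_general l
  obtain ⟨B, hB, hBP⟩ := h A hA
  exact ⟨p, B, hB, P, hP, hBP⟩
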